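/- Let s > 1 be an integer. Suppose nonzero integers w, m, y satisfy: y divides m, and w divides smy + gcd(w,s) or smy − gcd(w,s). Then the residue class w + smℤ is s-good with good representative w, and for every integer r with r ≡ w (mod sm) and r ∉ {0, w, gcd(w,s), −gcd(w,s)}, the number s/r is a 2-step relation number. -/

import Mathlib

/-- `a = [[1,0],[1,1]]` as an element of `SL(2, ℂ)`. -/
def matA : Matrix.SpecialLinearGroup (Fin 2) ℂ :=
  ⟨!![1, 0; 1, 1], by simp [Matrix.det_fin_two_of]⟩

/-- `b_q = [[1,q],[0,1]]` as an element of `SL(2, ℂ)`. -/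
def matB (q : ℂ) : Matrix.SpecialLinearGroup (Fin 2) ℂ :=
  ⟨!![1, q; 0, 1], by simp [Matrix.det_fin_two_of]⟩

/-- `q` is a relation number: the homomorphism `F₂ → SL(2,ℂ)`, `x ↦ a`, `y ↦ b_q`,
is not injective. -/
def IsRelationNumber (q : ℂ) : Prop :=
  ¬ Function.Injective
    (FreeGroup.lift (fun i : Bool => if i then matA else matB q) :
      FreeGroup Bool →* Matrix.SpecialLinearGroup (Fin 2) ℂ)

/-- `q` is an `ℓ`-step relation number: there are `k ≤ ℓ` and nonzero integers
`m_1, …, m_{2k+1}` with `b_q^{m_1} a^{m_2} ⋯ b_q^{m_{2k+1}}` lower triangular. -/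
def IsStepRelationNumber (ℓ : ℕ) (q : ℂ) : Prop :=
  ∃ k : ℕ, k ≤ ℓ ∧ ∃ m : Fin (2 * k + 1) → ℤ, (∀ i, m i ≠ 0) ∧
    ((List.ofFn (fun i : Fin (2 * k + 1) =>
      (if (i : ℕ) % 2 = 0 then matB q else matA) ^ (m i))).prod).val 0 1 = 0

/-- The residue class `w + smℤ` is `s`-good with good representative `w`. -/
def IsGoodRep (s w m : ℤ) : Prop :=
  ∃ y : ℤ, y * (Int.gcd w (s * m) : ℤ) ∣ m * (Int.gcd w s : ℤ) ∧
    (w ∣ s * m * y + (Int.gcd w (s * m) : ℤ) ∨ w ∣ s * m * y - (Int.gcd w (s * m) : ℤ))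

lemma matB_zpow (q : ℂ) (n : ℤ) : ((matB q) ^ n).val = !![1, n * q; 0, 1] := by
  have h : ∀ x y : ℂ, matB (x + y) = matB x * matB y := by
    intro x y
    apply Subtype.ext
    rw [Matrix.SpecialLinearGroup.coe_mul]
    simp [matB, add_comm]
  have hn : ∀ k : ℕ, matB q ^ k = matB (k * q) := by
    intro k
    induction k with
    | zero => rw [pow_zero]; ext i j; fin_cases i <;> fin_cases j <;> simp [matB]
    | succ k ih => rw [pow_succ, ih, ← h]; congr 1; push_cast; ring
  have hz : matB q ^ n = matB (n * q) := by
    cases n with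
    | ofNat k => simpa using hn k
    | negSucc k =>
      rw [zpow_negSucc, hn, inv_eq_iff_mul_eq_one, ← h]
      ext i j; fin_cases i <;> fin_cases j <;> simp [matB]
      ring
  rw [hz]; rfl

lemma matA_zpow (n : ℤ) : (matA ^ n).val = !![1, 0; (n : ℂ), 1] := by
  let L : ℂ → Matrix.SpecialLinearGroup (Fin 2) ℂ :=
    fun x => ⟨!![1, 0; x, 1], by simp [Matrix.det_fin_two_of]⟩
  have h : ∀ x y : ℂ, L (x + y) = L x * L y := by
    intro x y
    apply Subtype.ext
    rw [Matrix.SpecialLinearGroup.coe_mul]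
    simp [L]
  have hn : ∀ k : ℕ, matA ^ k = L k := by
    intro k
    induction k with
    | zero => rw [pow_zero]; ext i j; fin_cases i <;> fin_cases j <;> simp [L]
    | succ k ih => rw [pow_succ, ih, Nat.cast_succ, h]; rfl
  have hz : matA ^ n = L n := by
    cases n with
    | ofNat k => simpa using hn k
    | negSucc k =>
      rw [zpow_negSucc, hn, inv_eq_iff_mul_eq_one, ← h]
      ext i j; fin_cases i <;> fin_cases j <;> simp [L]
  rw [hz]

lemma step_two_of (q x : ℂ) (a b c d e : ℤ) (ha : a ≠ 0) (hb : b ≠ 0) (hc : c ≠ 0)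
    (hd : d ≠ 0) (he : e ≠ 0) (h1 : 1 + (a * b : ℂ) * q = x) (h2 : 1 + (d * e : ℂ) * q = x)
    (h3 : (a : ℂ) + e + c * x = 0) : IsStepRelationNumber 2 q := by
  refine ⟨2, le_rfl, ![a, b, c, d, e], ?_, ?_⟩
  · intro i; fin_cases i <;> simpa
  · have key : ((matB q ^ a * (matA ^ b * (matB q ^ c * (matA ^ d * matB q ^ e)))).val 0 1) = 0 := by
      simp only [Matrix.SpecialLinearGroup.coe_mul, matA_zpow, matB_zpow]
      simp [Matrix.mul_apply, Fin.sum_univ_two]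
      linear_combination q * x * h3 + (q * e + q * c * x) * h1 + (a * q + c * q * (1 + a * b * q)) * h2
    simpa [List.ofFn_succ] using key

lemma core (s w m y ε : ℤ) (hε : ε * ε = 1) (hw : w ≠ 0) (hm : m ≠ 0) (hy : y ≠ 0)
    (hym : y ∣ m) (hdvd : w ∣ s * m * y + ε * (Int.gcd w s : ℤ))
    (r : ℤ) (hr : s * m ∣ r - w) (hr0 : r ≠ 0) (hrw : r ≠ w)
    (h1 : r ≠ (Int.gcd w s : ℤ)) (h2 : r ≠ -(Int.gcd w s : ℤ)) :
    IsStepRelationNumber 2 ((s : ℂ) / (r : ℂ)) := by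
  obtain ⟨g, hg⟩ : ∃ g : ℤ, g = (Int.gcd w s : ℤ) := ⟨_, rfl⟩
  have hgw : g ∣ w := hg ▸ Int.gcd_dvd_left ..
  have hgs : g ∣ s := hg ▸ Int.gcd_dvd_right ..
  rw [← hg] at hdvd h1 h2
  obtain ⟨n, hn⟩ := hr
  obtain ⟨c, hc⟩ := hdvd
  obtain ⟨t, ht⟩ := hym
  have hrn : r = w + s * m * n := by linarith
  have hgr : g ∣ r := by
    rw [hrn]; exact dvd_add hgw (Dvd.dvd.mul_right (Dvd.dvd.mul_right hgs _) _)
  obtain ⟨r', hr'⟩ := hgr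
  have hg0 : g ≠ 0 := by rintro rfl; simp at hr'; exact hr0 hr'
  have hr'0 : r' ≠ 0 := by rintro rfl; simp at hr'; exact hr0 hr'
  have hε0 : ε ≠ 0 := by rintro rfl; simp at hε
  have hn0 : n ≠ 0 := by rintro rfl; simp at hrn; exact hrw hrn
  have ht0 : t ≠ 0 := by rintro rfl; simp at ht; exact hm ht
  have hrc : r * c = ε * g + s * m * (n * c + y) := by
    rw [hrn]; linear_combination -hc
  have hu : n * c + y ≠ 0 := by
    intro h0
    rw [h0, mul_zero, add_zero, hr'] at hrc
    have : r' * c = ε := mul_left_cancel₀ hg0 (by linarith)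
    have h3 : IsUnit r' := by
      refine IsUnit.of_mul_eq_one (c * ε) ?_
      rw [← mul_assoc, this, hε]
    rcases Int.isUnit_iff.mp h3 with h | h
    · exact h1 (by rw [hr', h, mul_one])
    · exact h2 (by rw [hr', h]; ring)
  have hrC : (r : ℂ) ≠ 0 := by exact_mod_cast hr0
  have hrcC : (r : ℂ) * c = ε * g + s * m * (n * c + y) := by exact_mod_cast hrc
  have hr'C : (r : ℂ) = g * r' := by exact_mod_cast hr'
  have hεC : (ε : ℂ) * ε = 1 := by exact_mod_cast hε
  have htC : (m : ℂ) = y * t := by exact_mod_cast ht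
  have hP : 1 + (ε * m * r' * (n * c + y) : ℂ) * (s / r) = ε * r' * c := by
    field_simp
    linear_combination (-ε * r') * hrcC + hr'C - g * r' * hεC
  refine step_two_of _ (ε * r' * c) (r' * (n * c + y)) (ε * m) (-(ε * n))
    (-(ε * t * (n * c + y))) (-(r' * y)) (mul_ne_zero hr'0 hu) (mul_ne_zero hε0 hm)
    (neg_ne_zero.2 (mul_ne_zero hε0 hn0))
    (neg_ne_zero.2 (mul_ne_zero (mul_ne_zero hε0 ht0) hu))
    (neg_ne_zero.2 (mul_ne_zero hr'0 hy)) ?_ ?_ ?_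
  · rw [← hP]; push_cast; ring
  · rw [← hP, htC]; push_cast; ring
  · push_cast; linear_combination (-(n : ℂ) * r' * c) * hεC

theorem stmt12 (s w m y : ℤ) (hs : 1 < s) (hw : w ≠ 0) (hm : m ≠ 0) (hy : y ≠ 0)
    (hym : y ∣ m)
    (hdvd : w ∣ s * m * y + (Int.gcd w s : ℤ) ∨ w ∣ s * m * y - (Int.gcd w s : ℤ)) :
    IsGoodRep s w m ∧
      ∀ r : ℤ, s * m ∣ r - w → r ≠ 0 → r ≠ w →
        r ≠ (Int.gcd w s : ℤ) → r ≠ -(Int.gcd w s : ℤ) →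
          IsStepRelationNumber 2 ((s : ℂ) / (r : ℂ)) := by
  refine ⟨?_, ?_⟩
  · have hD : (Int.gcd w (s * m) : ℤ) = (Int.gcd w s : ℤ) := by
      have e1 : (Int.gcd w (s * m) : ℤ) ∣ w := Int.gcd_dvd_left ..
      have e2 : (Int.gcd w (s * m) : ℤ) ∣ s * m := Int.gcd_dvd_right ..
      have a1 : (Int.gcd w (s * m) : ℤ) ∣ (Int.gcd w s : ℤ) := by
        rcases hdvd with h | h
        · exact (dvd_add_right (Dvd.dvd.mul_right e2 y)).1 (e1.trans h)
        · exact (dvd_sub_right (Dvd.dvd.mul_right e2 y)).1 (e1.trans h)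
      have a2 : (Int.gcd w s : ℤ) ∣ (Int.gcd w (s * m) : ℤ) :=
        Int.dvd_coe_gcd (Int.gcd_dvd_left ..) (Dvd.dvd.mul_right (Int.gcd_dvd_right ..) m)
      exact Int.dvd_antisymm (by positivity) (by positivity) a1 a2
    refine ⟨y, ?_, ?_⟩
    · rw [hD]; exact mul_dvd_mul_right hym _
    · rw [hD]; exact hdvd
  · intro r hr hr0 hrw h1 h2
    rcases hdvd with h | h
    · exact core s w m y 1 (by norm_num) hw hm hy hym (by simpa using h) r hr hr0 hrw h1 h2
    · exact core s w m y (-1) (by norm_num) hw hm hy hym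
        (by simpa [sub_eq_add_neg] using h) r hr hr0 hrw h1 h2
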